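/- For every ψ ∈ C_c^∞(ℝ²), every γ, θ ∈ S¹ and every s ∈ ℝ, one has T(V_γ²ψ)(s,θ) = sin²(θ−γ) · T(Δψ)(s,θ), where V_γ := cos(γ) ∂_{x₁} + sin(γ) ∂_{x₂} is the constant directional derivative operator and Δ = ∂_{x₁}² + ∂_{x₂}² is the Laplacian on ℝ². -/

import Mathlib

open MeasureTheory Real

noncomputable section

/-- Directional derivative of a function on `ℝ²` in the direction `v`. -/
def pd (v : ℝ × ℝ) (ψ : ℝ × ℝ → ℝ) : ℝ × ℝ → ℝ := fun p => fderiv ℝ ψ p v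

/-- The Laplacian `Δ = ∂_{x₁}² + ∂_{x₂}²` on `ℝ²`. -/
def lap (ψ : ℝ × ℝ → ℝ) : ℝ × ℝ → ℝ := fun p =>
  pd (1, 0) (pd (1, 0) ψ) p + pd (0, 1) (pd (0, 1) ψ) p

/-- The X-ray transform `Tψ(s,θ)`. -/
def xray (ψ : ℝ × ℝ → ℝ) (s θ : ℝ) : ℝ :=
  ∫ t : ℝ, ψ (t * Real.cos θ - s * Real.sin θ, t * Real.sin θ + s * Real.cos θ)

/-- The constant vector field `V_γ = cos γ ∂_{x₁} + sin γ ∂_{x₂}`. -/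
def Vdir (γ : ℝ) (ψ : ℝ × ℝ → ℝ) : ℝ × ℝ → ℝ := pd (Real.cos γ, Real.sin γ) ψ

/-!
Modulo multiples of the Laplacian, `V_α V_β` depends only on `α + β`: it differs from
`V_θ V_{α + β - θ}` by `sin (θ - α) sin (θ - β) Δ`. The X-ray transform at angle `θ` kills the range
of `V_θ`, since it integrates along the lines in that direction.
-/

section Line

variable {E F : Type*} [NormedAddCommGroup E] [NormedSpace ℝ E] [NormedAddCommGroup F]
  {f : E → F}

theorem integrable_comp_line (hf : Continuous f) (hsupp : HasCompactSupport f) (x : E) {v : E}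
    (hv : v ≠ 0) : Integrable fun t : ℝ => f (x + t • v) := by
  have hline : Topology.IsClosedEmbedding fun t : ℝ => x + t • v :=
    (Homeomorph.addLeft x).isClosedEmbedding.comp (isClosedEmbedding_smul_left hv)
  exact (hf.comp hline.continuous).integrable_of_hasCompactSupport
    (hsupp.comp_isClosedEmbedding hline)

theorem integral_fderiv_line_eq_zero [NormedSpace ℝ F] (hf : ContDiff ℝ 1 f)
    (hsupp : HasCompactSupport f) (x v : E) : ∫ t : ℝ, fderiv ℝ f (x + t • v) v = 0 := by
  rcases eq_or_ne v 0 with rfl | hv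
  · simp
  have hderiv (t : ℝ) :
      HasDerivAt (fun t : ℝ => f (x + t • v)) (fderiv ℝ f (x + t • v) v) t := by
    have hline : HasDerivAt (fun t : ℝ => x + t • v) v t := by
      simpa using ((hasDerivAt_id t).smul_const v).const_add x
    exact (hf.differentiable one_ne_zero _).hasFDerivAt.comp_hasDerivAt t hline
  exact integral_eq_zero_of_hasDerivAt_of_integrable hderiv
    (integrable_comp_line ((hf.continuous_fderiv one_ne_zero).clm_apply continuous_const)
      (hsupp.fderiv_apply ℝ v) x hv)
    (integrable_comp_line hf.continuous hsupp x hv)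

end Line

theorem fderiv_fderiv_apply {𝕜 E F : Type*} [NontriviallyNormedField 𝕜] [NormedAddCommGroup E]
    [NormedSpace 𝕜 E] [NormedAddCommGroup F] [NormedSpace 𝕜 F] {f : E → F} {x : E}
    (hf : DifferentiableAt 𝕜 (fderiv 𝕜 f) x) (u v : E) :
    fderiv 𝕜 (fun y => fderiv 𝕜 f y v) x u = fderiv 𝕜 (fderiv 𝕜 f) x u v := by
  simp [fderiv_clm_apply hf (differentiableAt_const v)]

theorem sin_sub_mul_sin_sub (θ α β : ℝ) :
    sin (θ - α) * sin (θ - β) = cos α * cos β - cos θ * cos (α + β - θ) := by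
  simp only [sin_sub, cos_sub, cos_add, sin_add]
  linear_combination cos α * cos β * sin_sq_add_cos_sq θ

section DirectionalDerivative

variable {ψ : ℝ × ℝ → ℝ}

theorem contDiff_pd {m n : WithTop ℕ∞} (hψ : ContDiff ℝ n ψ) (hmn : m + 1 ≤ n) (v : ℝ × ℝ) :
    ContDiff ℝ m (pd v ψ) :=
  (hψ.fderiv_right hmn).clm_apply contDiff_const

theorem hasCompactSupport_pd (hsupp : HasCompactSupport ψ) (v : ℝ × ℝ) :
    HasCompactSupport (pd v ψ) :=
  hsupp.fderiv_apply ℝ v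

theorem pd_pd_apply {p : ℝ × ℝ} (hψ : ContDiffAt ℝ 2 ψ p) (u v : ℝ × ℝ) :
    pd u (pd v ψ) p = fderiv ℝ (fderiv ℝ ψ) p u v :=
  fderiv_fderiv_apply ((hψ.fderiv_right le_rfl).differentiableAt one_ne_zero) u v

theorem Vdir_Vdir_apply {p : ℝ × ℝ} (hψ : ContDiffAt ℝ 2 ψ p) (α β : ℝ) :
    Vdir α (Vdir β ψ) p = cos α * cos β * pd (1, 0) (pd (1, 0) ψ) p +
      sin (α + β) * pd (1, 0) (pd (0, 1) ψ) p +
      sin α * sin β * pd (0, 1) (pd (0, 1) ψ) p := by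
  have hsymm : fderiv ℝ (fderiv ℝ ψ) p (0, 1) (1, 0) = fderiv ℝ (fderiv ℝ ψ) p (1, 0) (0, 1) :=
    hψ.isSymmSndFDerivAt (by simp) (0, 1) (1, 0)
  have hbasis (a b : ℝ) : ((a, b) : ℝ × ℝ) = a • (1, 0) + b • (0, 1) := by simp
  simp only [Vdir, pd_pd_apply hψ]
  rw [hbasis (cos α), hbasis (cos β)]
  simp only [map_add, map_smul, add_apply, smul_apply, smul_eq_mul, hsymm, sin_add]
  ring

theorem Vdir_Vdir_sub_Vdir_Vdir {p : ℝ × ℝ} (hψ : ContDiffAt ℝ 2 ψ p) (θ α β : ℝ) :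
    Vdir α (Vdir β ψ) p - Vdir θ (Vdir (α + β - θ) ψ) p =
      sin (θ - α) * sin (θ - β) * lap ψ p := by
  have hcos : cos (α + β) = cos (θ + (α + β - θ)) := by rw [add_sub_cancel]
  have hsin : sin α * sin β - sin θ * sin (α + β - θ) = sin (θ - α) * sin (θ - β) := by
    rw [cos_add α, cos_add θ] at hcos
    linear_combination -hcos - sin_sub_mul_sin_sub θ α β
  rw [Vdir_Vdir_apply hψ, Vdir_Vdir_apply hψ, add_sub_cancel, lap]
  linear_combination
    -pd (1, 0) (pd (1, 0) ψ) p * sin_sub_mul_sin_sub θ α β +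
      pd (0, 1) (pd (0, 1) ψ) p * hsin

end DirectionalDerivative

section Xray

variable {f g : ℝ × ℝ → ℝ}

theorem xray_eq_integral_line (f : ℝ × ℝ → ℝ) (s θ : ℝ) :
    xray f s θ = ∫ t : ℝ, f ((-(s * sin θ), s * cos θ) + t • (cos θ, sin θ)) := by
  simp only [xray, Prod.smul_mk, Prod.mk_add_mk, smul_eq_mul, neg_add_eq_sub,
    add_comm (s * cos θ)]

theorem xray_Vdir_self (hf : ContDiff ℝ 1 f) (hsupp : HasCompactSupport f) (s θ : ℝ) :
    xray (Vdir θ f) s θ = 0 := by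
  rw [xray_eq_integral_line]
  exact integral_fderiv_line_eq_zero hf hsupp _ _

theorem xray_sub (hf : Continuous f) (hf_supp : HasCompactSupport f) (hg : Continuous g)
    (hg_supp : HasCompactSupport g) (s θ : ℝ) :
    xray (fun p => f p - g p) s θ = xray f s θ - xray g s θ := by
  have hdir : ((cos θ, sin θ) : ℝ × ℝ) ≠ 0 := fun h => by
    obtain ⟨hcos, hsin⟩ := Prod.mk.inj h
    simpa [hcos, hsin] using sin_sq_add_cos_sq θ
  simp only [xray_eq_integral_line]
  exact integral_sub (integrable_comp_line hf hf_supp _ hdir)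
    (integrable_comp_line hg hg_supp _ hdir)

theorem xray_const_mul (c : ℝ) (f : ℝ × ℝ → ℝ) (s θ : ℝ) :
    xray (fun p => c * f p) s θ = c * xray f s θ :=
  integral_const_mul c _

end Xray

theorem xray_Vdir_sq_general {ψ : ℝ × ℝ → ℝ} (hψ : ContDiff ℝ 2 ψ) (hsupp : HasCompactSupport ψ)
    (α β θ s : ℝ) :
    xray (Vdir α (Vdir β ψ)) s θ = sin (θ - α) * sin (θ - β) * xray (lap ψ) s θ := by
  have hV (γ : ℝ) : ContDiff ℝ 1 (Vdir γ ψ) := contDiff_pd hψ le_rfl _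
  have hV_supp (γ : ℝ) : HasCompactSupport (Vdir γ ψ) := hasCompactSupport_pd hsupp _
  have hVV (γ δ : ℝ) : Continuous (Vdir γ (Vdir δ ψ)) :=
    (contDiff_pd (m := 0) (hV δ) (zero_add 1).le _).continuous
  have hVV_supp (γ δ : ℝ) : HasCompactSupport (Vdir γ (Vdir δ ψ)) :=
    hasCompactSupport_pd (hV_supp δ) _
  calc xray (Vdir α (Vdir β ψ)) s θ
      = xray (fun p => Vdir α (Vdir β ψ) p - Vdir θ (Vdir (α + β - θ) ψ) p) s θ := by
        rw [xray_sub (hVV _ _) (hVV_supp _ _) (hVV _ _) (hVV_supp _ _),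
          xray_Vdir_self (hV _) (hV_supp _), sub_zero]
    _ = xray (fun p => sin (θ - α) * sin (θ - β) * lap ψ p) s θ := by
        simp only [Vdir_Vdir_sub_Vdir_Vdir hψ.contDiffAt]
    _ = sin (θ - α) * sin (θ - β) * xray (lap ψ) s θ := xray_const_mul _ _ s θ

theorem xray_Vdir_sq (ψ : ℝ × ℝ → ℝ) (hψ : ContDiff ℝ (⊤ : ℕ∞) ψ) (hsupp : HasCompactSupport ψ)
    (γ θ s : ℝ) :
    xray (Vdir γ (Vdir γ ψ)) s θ = Real.sin (θ - γ) ^ 2 * xray (lap ψ) s θ := by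
  rw [xray_Vdir_sq_general (contDiff_infty.mp hψ 2) hsupp, sq]

end
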